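/- Let α be a positive word and ν ∈ Λ* with |α| ≥ |ν|. If α = ν·r for some positive word r, then S_ν S_ν* S_α = S_α; if α is not of the form ν·r for any positive word r, then S_ν S_ν* S_α = 0. -/

import Mathlib

open ContinuousLinearMap

/-- For a positive word `μ = μ₁…μ_k` over the alphabet `{1,…,n}`,
`Sw S μ = S_{μ₁} ⋯ S_{μ_k}`, with `Sw S [] = 1`. -/
noncomputable def Sw {H : Type*} [NormedAddCommGroup H] [InnerProductSpace ℂ H]
    {n : ℕ} (S : Fin n → H →L[ℂ] H) (μ : List (Fin n)) : H →L[ℂ] H :=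
  (μ.map S).prod

/-!
If `s` is a partial isometry whose initial projection `s* s` commutes with `x x*`, then
`(s x) (s x)* (s y) = s (x x* y)`. This lets one strip the common first letters of `ν` and `α` from
`S_ν S_ν* S_α`. Either `ν` is exhausted, which leaves `S_α`, or the words reach distinct first
letters `i ≠ j`, and the product vanishes because `S_i* S_j = 0`. This orthogonality of ranges
follows from `∑ S_k S_k* ≤ 1`: compressing by `S_j` gives `∑ |S_k* S_j|² ≤ S_j* S_j`, where the term
`k = j` already equals the right-hand side.
-/

section PartialIsometries

variable {M ι : Type*}

/-- Partial isometries in a multiplicative structure with involution, defined algebraically by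
`s s* s = s` so that the results on words in such elements need only the product and the star. -/
def IsPartialIsometry [Mul M] [Star M] (s : M) : Prop :=
  s * star s * s = s

theorem IsPartialIsometry.mul_mul_star_mul_mul [Semigroup M] [StarMul M] {s x : M}
    (hs : IsPartialIsometry s) (hcomm : Commute (x * star x) (star s * s)) (y : M) :
    s * x * star (s * x) * (s * y) = s * (x * star x * y) :=
  calc s * x * star (s * x) * (s * y)
      = s * ((x * star x) * (star s * s)) * y := by simp only [star_mul, mul_assoc]
    _ = s * ((star s * s) * (x * star x)) * y := by rw [hcomm.eq]
    _ = s * star s * s * (x * star x * y) := by simp only [mul_assoc]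
    _ = s * (x * star x * y) := by rw [hs]

theorem IsPartialIsometry.mul [Semigroup M] [StarMul M] {s t : M}
    (hs : IsPartialIsometry s) (ht : IsPartialIsometry t)
    (hcomm : Commute (t * star t) (star s * s)) : IsPartialIsometry (s * t) :=
  (hs.mul_mul_star_mul_mul hcomm t).trans (congrArg (s * ·) ht)

theorem isPartialIsometry_prod_map [Monoid M] [StarMul M] {s : ι → M} {ν : List ι}
    (hs : ∀ i ∈ ν, IsPartialIsometry (s i))
    (hcomm : ∀ i w, i :: w <:+ ν →
      Commute ((w.map s).prod * star (w.map s).prod) (star (s i) * s i)) :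
    IsPartialIsometry (ν.map s).prod := by
  induction ν with
  | nil => simp [IsPartialIsometry]
  | cons i w ih =>
    rw [List.map_cons, List.prod_cons]
    have hw : IsPartialIsometry (w.map s).prod :=
      ih (fun j hj ↦ hs j (List.mem_cons_of_mem i hj))
        fun j v hv ↦ hcomm j v (hv.trans (List.suffix_cons i w))
    exact (hs i List.mem_cons_self).mul hw (hcomm i w List.suffix_rfl)

theorem prod_map_mul_star_mul_prod_map_eq_zero_of_not_prefix [MonoidWithZero M] [StarMul M]
    {s : ι → M} {α ν : List ι} (hs : ∀ i ∈ ν, IsPartialIsometry (s i))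
    (horth : Pairwise fun i j ↦ star (s i) * s j = 0)
    (hcomm : ∀ i w, i :: w <:+ ν →
      Commute ((w.map s).prod * star (w.map s).prod) (star (s i) * s i))
    (hlen : ν.length ≤ α.length) (hprefix : ¬ ν <+: α) :
    (ν.map s).prod * star (ν.map s).prod * (α.map s).prod = 0 := by
  induction ν generalizing α with
  | nil => exact absurd List.nil_prefix hprefix
  | cons i w ih =>
    obtain _ | ⟨j, β⟩ := α
    · simp at hlen
    simp only [List.map_cons, List.prod_cons]
    obtain rfl | hij := eq_or_ne i j
    · have hβ : (w.map s).prod * star (w.map s).prod * (β.map s).prod = 0 :=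
        ih (fun j hj ↦ hs j (List.mem_cons_of_mem i hj))
          (fun j v hv ↦ hcomm j v (hv.trans (List.suffix_cons i w)))
          (Nat.le_of_succ_le_succ hlen) (mt (List.prefix_cons_inj i).mpr hprefix)
      rw [(hs i List.mem_cons_self).mul_mul_star_mul_mul (hcomm i w List.suffix_rfl), hβ, mul_zero]
    · calc s i * (w.map s).prod * star (s i * (w.map s).prod) * (s j * (β.map s).prod)
          = s i * (w.map s).prod * star (w.map s).prod * (star (s i) * s j) * (β.map s).prod := by
            simp only [star_mul, mul_assoc]
        _ = 0 := by rw [horth hij, mul_zero, zero_mul]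

theorem IsPartialIsometry.star_mul_eq_zero_of_sum_mul_star_le_one [NormedRing M] [StarRing M]
    [CStarRing M] [PartialOrder M] [StarOrderedRing M] [Fintype ι] {s : ι → M} {i j : ι}
    (hj : IsPartialIsometry (s j)) (hsum : ∑ k, s k * star (s k) ≤ 1) (hij : i ≠ j) :
    star (s i) * s j = 0 := by
  classical
  let f : ι → M := fun k ↦ star (star (s k) * s j) * (star (s k) * s j)
  have hf_nonneg (k : ι) : 0 ≤ f k := star_mul_self_nonneg _
  have hf_j : f j = star (s j) * s j := by
    simpa [f, mul_assoc] using congrArg (star (s j) * ·) hj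
  have hf_sum : ∑ k, f k ≤ f j := by
    rw [hf_j]
    simpa [f, Finset.mul_sum, Finset.sum_mul, mul_assoc] using
      star_left_conjugate_le_conjugate hsum (s j)
  have hf_erase : ∑ k ∈ Finset.univ.erase j, f k = 0 := by
    rw [← Finset.add_sum_erase _ f (Finset.mem_univ j)] at hf_sum
    exact le_antisymm ((add_le_iff_nonpos_right _).mp hf_sum)
      (Finset.sum_nonneg fun k _ ↦ hf_nonneg k)
  have hf_i : f i = 0 :=
    (Finset.sum_eq_zero_iff_of_nonneg fun k _ ↦ hf_nonneg k).mp hf_erase i (by simp [hij])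
  exact (CStarRing.star_mul_self_eq_zero_iff _).mp hf_i

theorem stmt_3_general [MonoidWithZero M] [StarMul M] {s : ι → M} {α ν : List ι}
    (hs : ∀ i ∈ ν, IsPartialIsometry (s i))
    (horth : Pairwise fun i j ↦ star (s i) * s j = 0)
    (hcomm : ∀ i w, i :: w <:+ ν →
      Commute ((w.map s).prod * star (w.map s).prod) (star (s i) * s i))
    (hlen : ν.length ≤ α.length) :
    (∀ r, α = ν ++ r →
      (ν.map s).prod * star (ν.map s).prod * (α.map s).prod = (α.map s).prod) ∧
    ((∀ r, α ≠ ν ++ r) →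
      (ν.map s).prod * star (ν.map s).prod * (α.map s).prod = 0) := by
  refine ⟨?_, fun hne ↦ ?_⟩
  · rintro r rfl
    rw [List.map_append, List.prod_append, ← mul_assoc, isPartialIsometry_prod_map hs hcomm]
  · have hprefix : ¬ ν <+: α := fun ⟨r, hr⟩ ↦ hne r hr.symm
    exact prod_map_mul_star_mul_prod_map_eq_zero_of_not_prefix hs horth hcomm hlen hprefix

end PartialIsometries

theorem stmt_3 {H : Type*} [NormedAddCommGroup H] [InnerProductSpace ℂ H]
    [CompleteSpace H]
    (n : ℕ) (hn : 1 ≤ n) (S : Fin n → H →L[ℂ] H)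
    (hpi : ∀ i, S i * adjoint (S i) * S i = S i)
    (Λ : Set (List (Fin n)))
    (hΛe : ([] : List (Fin n)) ∈ Λ)
    (hΛg : ∀ i : Fin n, [i] ∈ Λ)
    (hΛsub : ∀ ν ∈ Λ, ∀ w : List (Fin n), w <:+: ν → w ∈ Λ)
    (hM1 : ∑ i, S i * adjoint (S i) = 1)
    (hM2 : ∀ μ ∈ Λ, ∀ ν ∈ Λ,
      Commute (Sw S μ * adjoint (Sw S μ)) (adjoint (Sw S ν) * Sw S ν))
    (α ν : List (Fin n)) (hν : ν ∈ Λ) (hlen : ν.length ≤ α.length) :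
    (∀ r : List (Fin n), α = ν ++ r → Sw S ν * adjoint (Sw S ν) * Sw S α = Sw S α) ∧
    ((∀ r : List (Fin n), α ≠ ν ++ r) → Sw S ν * adjoint (Sw S ν) * Sw S α = 0) := by
  have horth : Pairwise fun i j ↦ star (S i) * S j = 0 := fun _ j ↦
    IsPartialIsometry.star_mul_eq_zero_of_sum_mul_star_le_one (hpi j) hM1.le
  have hcomm (i : Fin n) (w : List (Fin n)) (hw : i :: w <:+ ν) :
      Commute (Sw S w * star (Sw S w)) (star (S i) * S i) := by
    have hwΛ : w ∈ Λ := hΛsub ν hν w ((List.suffix_cons i w).trans hw).isInfix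
    simpa [Sw, star_eq_adjoint] using hM2 w hwΛ [i] (hΛg i)
  exact stmt_3_general (fun i _ ↦ hpi i) horth hcomm hlen
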